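/- Let G be a finite graph, let k be a nonnegative integer, and let S ⊆ V(G) be such that every connected component D of G − S satisfies |N_G(D)| ≤ k. Let H be the torso of S in G. Suppose (A′,B′) is a solution such that A′ \ B′ is inclusion-wise minimal among all solutions, i.e., there is no solution (A,B) with A \ B ⊊ A′ \ B′. Then H[(A′ \ B′) ∩ S] is connected and every connected component of G[A′ \ B′] contains a vertex of S. -/

import Mathlib

/-- A separation of a graph `G`. -/
def IsSeparation {V : Type} (G : SimpleGraph V) (A B : Set V) : Prop :=
  A ∪ B = Set.univ ∧ ∀ u v : V, G.Adj u v → u ∈ A \ B → v ∉ B \ A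

/-- A solution (w.r.t. `G`, `k`, `S`): a separation `(A,B)` of order `ℓ ≤ k` with
`|A ∩ S| > ℓ` and `|B ∩ S| > ℓ`. -/
def IsSolution {V : Type} (G : SimpleGraph V) (k : ℕ) (S A B : Set V) : Prop :=
  IsSeparation G A B ∧ (A ∩ B).ncard ≤ k ∧
    (A ∩ B).ncard < (A ∩ S).ncard ∧ (A ∩ B).ncard < (B ∩ S).ncard

/-- `D` is a connected component of the subgraph of `G` induced by `W`. -/
def IsComponentOf {V : Type} (G : SimpleGraph V) (W D : Set V) : Prop :=
  D.Nonempty ∧ D ⊆ W ∧ (G.induce D).Connected ∧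
    ∀ u v : V, u ∈ D → v ∈ W → G.Adj u v → v ∈ D

/-- The (open) neighborhood of a vertex set `X` in `G`. -/
def nbhd {V : Type} (G : SimpleGraph V) (X : Set V) : Set V :=
  {v | v ∉ X ∧ ∃ u ∈ X, G.Adj u v}

/-- The torso of `S` in `G`. -/
def torso {V : Type} (G : SimpleGraph V) (S : Set V) : SimpleGraph V where
  Adj u v := u ≠ v ∧ u ∈ S ∧ v ∈ S ∧
    (G.Adj u v ∨ ∃ D : Set V, IsComponentOf G Sᶜ D ∧ u ∈ nbhd G D ∧ v ∈ nbhd G D)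
  symm := by
    refine ⟨?_⟩
    rintro u v ⟨hne, hu, hv, h | ⟨D, hD, h1, h2⟩⟩
    · exact ⟨hne.symm, hv, hu, Or.inl h.symm⟩
    · exact ⟨hne.symm, hv, hu, Or.inr ⟨D, hD, h2, h1⟩⟩
  loopless := ⟨fun u h => h.1 rfl⟩

/-!
Let `(A, B)` be a minimal solution. If `X` is a union of components of `G[A \ B]`, then
`N(X) ⊆ A ∩ B`, and `(X ∪ N(X), V \ X)` is a solution as soon as `|N(X) \ S| < |X ∩ S|`; by
minimality such an `X` is all of `A \ B`. Since `|A ∩ B| < |A ∩ S|`, the set `(A \ B) ∩ S` has more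
than `|(A ∩ B) \ S|` vertices, so a component of `G[A \ B]` avoiding `S` could be deleted from
`A \ B`.

For the torso `H`, let `P` be a union of components of `H[(A \ B) ∩ S]`, and let `X` consist of `P`
and the vertices of `A \ B` in components of `G - S` attached to `P`. If `P` is not all of
`(A \ B) ∩ S`, then at least `|P|` vertices of `(A ∩ B) \ S` lie in components of `G - S` attached
to `P`. If `P` is nonempty as well, the same holds for its complement `Q` in `(A \ B) ∩ S`, and no
component of `G - S` is attached to both `P` and `Q`. Adding the two bounds yields
`|(A \ B) ∩ S| ≤ |(A ∩ B) \ S|`, a contradiction.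
-/

section

variable {V : Type} {G : SimpleGraph V} {k : ℕ} {S A B W X P Q D : Set V} {u v x : V}

/-- `X` is a union of connected components of `G[W]`, encoded as a subset of `W` closed under
adjacency in `G[W]`. -/
structure IsAdjClosed (G : SimpleGraph V) (W X : Set V) : Prop where
  subset : X ⊆ W
  mem_of_adj : ∀ u v : V, u ∈ X → v ∈ W → G.Adj u v → v ∈ X

lemma IsAdjClosed.sdiff (hX : IsAdjClosed G W X) : IsAdjClosed G W (W \ X) where
  subset := Set.sdiff_subset
  mem_of_adj u v hu hv huv := ⟨hv, fun hvX => hu.2 (hX.mem_of_adj v u hvX hu.1 huv.symm)⟩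

lemma IsComponentOf.isAdjClosed (hD : IsComponentOf G W D) : IsAdjClosed G W D :=
  ⟨hD.2.1, hD.2.2.2⟩

lemma IsComponentOf.subset_of_mem (hD : IsComponentOf G W D) (hX : IsAdjClosed G W X)
    (hxD : x ∈ D) (hxX : x ∈ X) : D ⊆ X := by
  intro y hyD
  by_contra hyX
  obtain ⟨walk⟩ := hD.2.2.1.preconnected ⟨x, hxD⟩ ⟨y, hyD⟩
  obtain ⟨d, -, hfst, hsnd⟩ := walk.exists_boundary_dart (Subtype.val ⁻¹' X) hxX hyX
  exact hsnd (hX.mem_of_adj d.fst d.snd hfst (hD.2.1 d.snd.2) d.adj)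

lemma isComponentOf_image_supp (C : (G.induce W).ConnectedComponent) :
    IsComponentOf G W (Subtype.val '' C.supp) := by
  refine ⟨C.nonempty_supp.image _, Subtype.coe_image_subset W _, ?_, ?_⟩
  · exact C.maximal_connected_induce_supp.prop.map
      (SimpleGraph.induceHom (SimpleGraph.Embedding.induce W).toHom (Set.mapsTo_image _ _))
      (Set.surjective_mapsTo_image_restrict _ _)
  · rintro _ v ⟨u, hu, rfl⟩ hv huv
    exact ⟨⟨v, hv⟩, C.mem_supp_of_adj_mem_supp hu huv, rfl⟩

lemma exists_isComponentOf_mem (G : SimpleGraph V) (hx : x ∈ W) :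
    ∃ D, IsComponentOf G W D ∧ x ∈ D :=
  ⟨_, isComponentOf_image_supp ((G.induce W).connectedComponentMk ⟨x, hx⟩), ⟨x, hx⟩, rfl, rfl⟩

lemma isSeparation_union_nbhd_compl (G : SimpleGraph V) (X : Set V) :
    IsSeparation G (X ∪ nbhd G X) Xᶜ := by
  refine ⟨?_, fun u v huv hu hv => ?_⟩
  · rw [Set.union_right_comm, Set.union_compl_self, Set.univ_union]
  · exact hv.2 (Or.inr ⟨hv.1, u, not_not.mp hu.2, huv⟩)

lemma disjoint_nbhd (G : SimpleGraph V) (X : Set V) : Disjoint X (nbhd G X) :=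
  Set.disjoint_left.mpr fun _ hx hxN => hxN.1 hx

lemma union_nbhd_inter_compl (G : SimpleGraph V) (X : Set V) :
    (X ∪ nbhd G X) ∩ Xᶜ = nbhd G X := by
  rw [← Set.sdiff_eq, Set.union_sdiff_cancel_left (disjoint_nbhd G X).le_bot]

lemma union_nbhd_sdiff_compl (G : SimpleGraph V) (X : Set V) :
    (X ∪ nbhd G X) \ Xᶜ = X := by
  rw [Set.sdiff_compl, Set.union_inter_cancel_left]

lemma IsSeparation.nbhd_subset_inter (h : IsSeparation G A B) (hX : IsAdjClosed G (A \ B) X) :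
    nbhd G X ⊆ A ∩ B := by
  rintro v ⟨hvX, u, hu, huv⟩
  have hvAB : v ∈ A ∪ B := h.1 ▸ Set.mem_univ v
  have hvBA : v ∉ B \ A := h.2 u v huv (hX.subset hu)
  have hvAdiff : v ∉ A \ B := fun hv => hvX (hX.mem_of_adj u v hu hv huv)
  grind

lemma IsSolution.finite_left (h : IsSolution G k S A B) : (A ∩ S).Finite :=
  Set.finite_of_ncard_pos (Nat.zero_lt_of_lt h.2.2.1)

lemma IsSolution.finite_terminals (h : IsSolution G k S A B) : S.Finite := by
  have hB : (B ∩ S).Finite := Set.finite_of_ncard_pos (Nat.zero_lt_of_lt h.2.2.2)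
  rw [← Set.univ_inter S, ← h.1.1, Set.union_inter_distrib_right]
  exact h.finite_left.union hB

lemma IsSolution.ncard_inter_sdiff_lt (h : IsSolution G k S A B) (hfin : (A ∩ B).Finite) :
    ((A ∩ B) \ S).ncard < ((A \ B) ∩ S).ncard := by
  have hAB := Set.ncard_inter_add_ncard_sdiff_eq_ncard (A ∩ B) S hfin
  have hAS := Set.ncard_inter_add_ncard_sdiff_eq_ncard (A ∩ S) B h.finite_left
  rw [Set.inter_right_comm, Set.inter_sdiff_right_comm] at hAS
  have hlt := h.2.2.1
  omega

lemma IsSolution.union_nbhd_compl (h : IsSolution G k S A B) (hfin : (A ∩ B).Finite)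
    (hX : IsAdjClosed G (A \ B) X) (hlt : (nbhd G X \ S).ncard < (X ∩ S).ncard) :
    IsSolution G k S (X ∪ nbhd G X) Xᶜ := by
  have hS : S.Finite := h.finite_terminals
  have hN : nbhd G X ⊆ A ∩ B := h.1.nbhd_subset_inter hX
  have horder : (nbhd G X).ncard ≤ (A ∩ B).ncard := Set.ncard_le_ncard hN hfin
  have hleft : ((X ∪ nbhd G X) ∩ S).ncard = (X ∩ S).ncard + (nbhd G X ∩ S).ncard := by
    rw [Set.union_inter_distrib_right]
    exact Set.ncard_union_eq ((disjoint_nbhd G X).mono Set.inter_subset_left Set.inter_subset_left)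
      (hS.inter_of_right X) (hS.inter_of_right _)
  have hright : (B ∩ S).ncard ≤ (Xᶜ ∩ S).ncard :=
    Set.ncard_le_ncard (Set.inter_subset_inter_left S fun _ hvB hvX => (hX.subset hvX).2 hvB)
      (hS.inter_of_right _)
  have hsplit := Set.ncard_inter_add_ncard_sdiff_eq_ncard (nbhd G X) S (hfin.subset hN)
  obtain ⟨-, hk, -, hB⟩ := h
  refine ⟨isSeparation_union_nbhd_compl G X, ?_⟩
  rw [union_nbhd_inter_compl]
  omega

/-- The union of the components of `G - S` that have a neighbour in `P`. -/
def attachedComponents (G : SimpleGraph V) (S P : Set V) : Set V :=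
  {x | ∃ D, IsComponentOf G Sᶜ D ∧ x ∈ D ∧ ∃ p ∈ P, p ∈ nbhd G D}

lemma attachedComponents_subset_compl (G : SimpleGraph V) (S P : Set V) :
    attachedComponents G S P ⊆ Sᶜ := by
  rintro x ⟨D, hD, hxD, -⟩
  exact hD.2.1 hxD

lemma mem_attachedComponents_of_adj (hPS : P ⊆ S) (hu : u ∈ P ∪ attachedComponents G S P)
    (huv : G.Adj u v) (hv : v ∉ S) : v ∈ attachedComponents G S P := by
  rcases hu with hu | ⟨D, hD, huD, hP⟩
  · obtain ⟨D, hD, hvD⟩ := exists_isComponentOf_mem G (W := Sᶜ) hv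
    exact ⟨D, hD, hvD, u, hu, fun huD => hD.2.1 huD (hPS hu), v, hvD, huv.symm⟩
  · exact ⟨D, hD, hD.2.2.2 u v huD hv huv, hP⟩

lemma torso_adj_of_mem_nbhd (hD : IsComponentOf G Sᶜ D) (hu : u ∈ nbhd G D) (hv : v ∈ nbhd G D)
    (huS : u ∈ S) (hvS : v ∈ S) (hne : u ≠ v) : (torso G S).Adj u v :=
  ⟨hne, huS, hvS, Or.inr ⟨D, hD, hu, hv⟩⟩

lemma mem_or_exists_torso_adj_of_adj (hPS : P ⊆ S) (hu : u ∈ P ∪ attachedComponents G S P)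
    (huv : G.Adj u v) (hv : v ∈ S) : v ∈ P ∨ ∃ p ∈ P, (torso G S).Adj p v := by
  rcases hu with hu | ⟨D, hD, huD, p, hp, hpD⟩
  · exact Or.inr ⟨u, hu, huv.ne, hPS hu, hv, Or.inl huv⟩
  · rcases eq_or_ne p v with rfl | hne
    · exact Or.inl hp
    · have hvD : v ∈ nbhd G D := ⟨fun hvD => hD.2.1 hvD hv, u, huD, huv⟩
      exact Or.inr ⟨p, hp, torso_adj_of_mem_nbhd hD hpD hvD (hPS hp) hv hne⟩

lemma disjoint_attachedComponents (hPS : P ⊆ S) (hQS : Q ⊆ S) (hPQ : Disjoint P Q)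
    (hadj : ∀ p ∈ P, ∀ q ∈ Q, ¬ (torso G S).Adj p q) :
    Disjoint (attachedComponents G S P) (attachedComponents G S Q) := by
  rw [Set.disjoint_left]
  rintro x ⟨D, hD, hxD, p, hp, hpD⟩ ⟨E, hE, hxE, q, hq, hqE⟩
  obtain rfl : D = E := (hD.subset_of_mem hE.isAdjClosed hxD hxE).antisymm
    (hE.subset_of_mem hD.isAdjClosed hxE hxD)
  exact hadj p hp q hq
    (torso_adj_of_mem_nbhd hD hpD hqE (hPS hp) (hQS hq) (hPQ.ne_of_mem hp hq))

/-- The vertices of `P` together with the part inside `W` of every component of `G - S` attached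
to `P`. It turns a union of components of `H[W ∩ S]`, `H` the torso of `S`, into a union of
components of `G[W]`. -/
def torsoLift (G : SimpleGraph V) (S W P : Set V) : Set V :=
  P ∪ W ∩ attachedComponents G S P

lemma torsoLift_subset_union (G : SimpleGraph V) (S W P : Set V) :
    torsoLift G S W P ⊆ P ∪ attachedComponents G S P :=
  Set.union_subset_union_right P Set.inter_subset_right

lemma torsoLift_inter (hPS : P ⊆ S) : torsoLift G S W P ∩ S = P := by
  have hdisj : W ∩ attachedComponents G S P ∩ S = ∅ := by
    rw [← Set.disjoint_iff_inter_eq_empty, ← Set.subset_compl_iff_disjoint_right]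
    exact Set.inter_subset_right.trans (attachedComponents_subset_compl G S P)
  rw [torsoLift, Set.union_inter_distrib_right, hdisj, Set.union_empty,
    Set.inter_eq_left.mpr hPS]

lemma nbhd_torsoLift_sdiff_subset (hPS : P ⊆ S) :
    nbhd G (torsoLift G S W P) \ S ⊆ attachedComponents G S P := by
  rintro v ⟨⟨-, u, hu, huv⟩, hvS⟩
  exact mem_attachedComponents_of_adj hPS (torsoLift_subset_union G S W P hu) huv hvS

lemma IsAdjClosed.torsoLift (hP : IsAdjClosed (torso G S) (W ∩ S) P) :
    IsAdjClosed G W (torsoLift G S W P) := by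
  have hPS : P ⊆ S := hP.subset.trans Set.inter_subset_right
  refine ⟨Set.union_subset (hP.subset.trans Set.inter_subset_left) Set.inter_subset_left, ?_⟩
  intro u v hu hvW huv
  have hu' := torsoLift_subset_union G S W P hu
  by_cases hvS : v ∈ S
  · left
    obtain hvP | ⟨p, hp, hpv⟩ := mem_or_exists_torso_adj_of_adj hPS hu' huv hvS
    · exact hvP
    · exact hP.mem_of_adj p v hp ⟨hvW, hvS⟩ hpv
  · exact Or.inr ⟨hvW, mem_attachedComponents_of_adj hPS hu' huv hvS⟩

/-- A solution `(A, B)` of finite order with `A \ B` inclusion-wise minimal among the solutions of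
finite order. Finiteness is part of the notion because `Set.ncard` is `0` on infinite sets. -/
structure IsMinimalSolution (G : SimpleGraph V) (k : ℕ) (S A B : Set V) : Prop where
  isSolution : IsSolution G k S A B
  finite_inter : (A ∩ B).Finite
  not_ssubset : ∀ A₁ B₁ : Set V, IsSolution G k S A₁ B₁ → (A₁ ∩ B₁).Finite → ¬ A₁ \ B₁ ⊂ A \ B

namespace IsMinimalSolution

lemma eq_sdiff_of_ncard_lt (h : IsMinimalSolution G k S A B) (hX : IsAdjClosed G (A \ B) X)
    (hlt : (nbhd G X \ S).ncard < (X ∩ S).ncard) : X = A \ B := by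
  have hfin : (nbhd G X).Finite := h.finite_inter.subset (h.isSolution.1.nbhd_subset_inter hX)
  have hmin := h.not_ssubset _ _ (h.isSolution.union_nbhd_compl h.finite_inter hX hlt)
  rw [union_nbhd_inter_compl, union_nbhd_sdiff_compl] at hmin
  exact eq_of_le_of_not_lt hX.subset (hmin hfin)

lemma inter_nonempty_of_isComponentOf (h : IsMinimalSolution G k S A B)
    (hD : IsComponentOf G (A \ B) D) : (D ∩ S).Nonempty := by
  by_contra hDS
  have hX : IsAdjClosed G (A \ B) ((A \ B) \ D) := hD.isAdjClosed.sdiff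
  have hXS : ((A \ B) \ D) ∩ S = (A \ B) ∩ S := by
    have hdisj : Disjoint D S :=
      Set.disjoint_iff_inter_eq_empty.mpr (Set.not_nonempty_iff_eq_empty.mp hDS)
    rw [Set.inter_comm, ← Set.inter_sdiff_assoc, Set.inter_comm S, sdiff_eq_left]
    exact hdisj.symm.mono_left Set.inter_subset_right
  have hN : (nbhd G ((A \ B) \ D) \ S).ncard ≤ ((A ∩ B) \ S).ncard :=
    Set.ncard_le_ncard (Set.sdiff_subset_sdiff_left (h.isSolution.1.nbhd_subset_inter hX))
      h.finite_inter.sdiff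
  have heq : (A \ B) \ D = A \ B := h.eq_sdiff_of_ncard_lt hX
    (hXS ▸ hN.trans_lt (h.isSolution.ncard_inter_sdiff_lt h.finite_inter))
  obtain ⟨d, hd⟩ := hD.1
  exact (heq.symm ▸ hD.2.1 hd : d ∈ (A \ B) \ D).2 hd

lemma ncard_le_ncard_inter_attachedComponents (h : IsMinimalSolution G k S A B)
    (hP : IsAdjClosed (torso G S) ((A \ B) ∩ S) P) (hne : P ≠ (A \ B) ∩ S) :
    P.ncard ≤ ((A ∩ B) ∩ attachedComponents G S P).ncard := by
  have hPS : P ⊆ S := hP.subset.trans Set.inter_subset_right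
  have hN : nbhd G (torsoLift G S (A \ B) P) \ S ⊆ (A ∩ B) ∩ attachedComponents G S P :=
    Set.subset_inter (Set.sdiff_subset.trans (h.isSolution.1.nbhd_subset_inter hP.torsoLift))
      (nbhd_torsoLift_sdiff_subset hPS)
  by_contra! hlt
  have hlift : torsoLift G S (A \ B) P = A \ B := h.eq_sdiff_of_ncard_lt hP.torsoLift <| by
    rw [torsoLift_inter hPS]
    exact (Set.ncard_le_ncard hN (h.finite_inter.inter_of_left _)).trans_lt hlt
  exact hne (hlift ▸ (torsoLift_inter hPS).symm)

lemma eq_of_isAdjClosed_torso (h : IsMinimalSolution G k S A B)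
    (hP : IsAdjClosed (torso G S) ((A \ B) ∩ S) P) (hne : P.Nonempty) : P = (A \ B) ∩ S := by
  by_contra hPW
  set Q := ((A \ B) ∩ S) \ P
  have hQW : Q ≠ (A \ B) ∩ S := fun hQ =>
    hne.ne_empty ((sdiff_eq_left.mp hQ).symm.eq_bot_of_le hP.subset)
  have hdisj : Disjoint (attachedComponents G S P) (attachedComponents G S Q) :=
    disjoint_attachedComponents (hP.subset.trans Set.inter_subset_right)
      (Set.sdiff_subset.trans Set.inter_subset_right) Set.disjoint_sdiff_right
      fun p hp q hq hpq => hq.2 (hP.mem_of_adj p q hp hq.1 hpq)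
  have hattached : ((A ∩ B) ∩ attachedComponents G S P).ncard +
      ((A ∩ B) ∩ attachedComponents G S Q).ncard ≤ ((A ∩ B) \ S).ncard := by
    have hfin (T : Set V) : ((A ∩ B) ∩ T).Finite := h.finite_inter.inter_of_left T
    rw [← Set.ncard_union_eq (hdisj.mono Set.inter_subset_right Set.inter_subset_right)
      (hfin _) (hfin _), ← Set.inter_union_distrib_left]
    exact Set.ncard_le_ncard (Set.inter_subset_inter_right _ (Set.union_subset
      (attachedComponents_subset_compl G S P) (attachedComponents_subset_compl G S Q)))
      h.finite_inter.sdiff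
  have hPQ : Q.ncard + P.ncard = ((A \ B) ∩ S).ncard :=
    Set.ncard_sdiff_add_ncard_of_subset hP.subset (h.isSolution.finite_terminals.inter_of_right _)
  have hPle := h.ncard_le_ncard_inter_attachedComponents hP hPW
  have hQle : Q.ncard ≤ ((A ∩ B) ∩ attachedComponents G S Q).ncard :=
    h.ncard_le_ncard_inter_attachedComponents hP.sdiff hQW
  have hlt := h.isSolution.ncard_inter_sdiff_lt h.finite_inter
  omega

lemma connected_torso_induce (h : IsMinimalSolution G k S A B) :
    ((torso G S).induce ((A \ B) ∩ S)).Connected := by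
  obtain ⟨x, hx⟩ : ((A \ B) ∩ S).Nonempty := Set.nonempty_of_ncard_ne_zero
    (Nat.ne_zero_of_lt (h.isSolution.ncard_inter_sdiff_lt h.finite_inter))
  obtain ⟨P, hP, -⟩ := exists_isComponentOf_mem (torso G S) hx
  exact h.eq_of_isAdjClosed_torso hP.isAdjClosed hP.1 ▸ hP.2.2.1

end IsMinimalSolution

theorem minimal_solution_connected_general (h : IsMinimalSolution G k S A B) :
    ((torso G S).induce ((A \ B) ∩ S)).Connected ∧
      ∀ D : Set V, IsComponentOf G (A \ B) D → (D ∩ S).Nonempty :=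
  ⟨h.connected_torso_induce, fun _ => h.inter_nonempty_of_isComponentOf⟩

end

/-- if every component of `G − S` has at most `k` attachment vertices
and `(A′,B′)` is a solution with inclusion-wise minimal `A′ \ B′` among all
solutions, then `H[(A′ \ B′) ∩ S]` is connected (`H` the torso of `S`) and every
connected component of `G[A′ \ B′]` contains a vertex of `S`. -/
theorem minimal_solution_connected
    {V : Type} [Fintype V] (G : SimpleGraph V) (k : ℕ)
    (S : Set V) (hS : ∀ D : Set V, IsComponentOf G Sᶜ D → (nbhd G D).ncard ≤ k)
    (A' B' : Set V) (hsol : IsSolution G k S A' B')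
    (hmin : ∀ A B : Set V, IsSolution G k S A B → ¬ (A \ B ⊂ A' \ B')) :
    ((torso G S).induce ((A' \ B') ∩ S)).Connected ∧
      ∀ D : Set V, IsComponentOf G (A' \ B') D → (D ∩ S).Nonempty := by
  exact minimal_solution_connected_general
    ⟨hsol, Set.toFinite _, fun A B hAB _ => hmin A B hAB⟩
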